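/- The unique unit-sphere minimizer of the recession function is opposite to the minimum-norm gradient point (claim in the proof of Theorem 3.12): suppose κ* := inf_{y ∈ ℝⁿ} ‖∇f(y)‖ > 0, and let p* be the unique minimum-norm point of the closure of the gradient image {∇f(y) : y ∈ ℝⁿ} (this closure is convex). Then p* ≠ 0, the unit vector u* := −p*/‖p*‖ satisfies f^∞(u*) = −‖p*‖, and every unit vector u ≠ u* satisfies f^∞(u) > −‖p*‖. -/

import Mathlib

open Filter
open scoped RealInnerProductSpace

/-- The recession function (asymptotic slope) of `f`:
`f^∞(u) = sup_{s>0} (f(su) - f(0))/s`, valued in `EReal`. -/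
noncomputable def recessionFn {n : ℕ} (f : EuclideanSpace ℝ (Fin n) → ℝ)
    (u : EuclideanSpace ℝ (Fin n)) : EReal :=
  ⨆ (s : ℝ) (_ : 0 < s), (((f (s • u) - f 0) / s : ℝ) : EReal)

/-!
Let `D` be the effective domain of the convex conjugate of `f`, that is, the set of slopes of
affine minorants of `f`. It is convex, and it contains every gradient because `f` lies above its
tangents. Conversely every `v ∈ D` is a limit of gradients: the strongly convex function
`x ↦ f x - ⟪v, x⟫ + ε / 2 * ‖x‖ ^ 2` attains its minimum, there `v - ∇ f x = ε • x`, and comparison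
with the value at `0` gives `‖ε • x‖ = O(√ε)`. Hence the closure of the gradient image is the
closure of `D`, so it is convex and its minimum-norm point `p` satisfies `‖p‖ ^ 2 ≤ ⟪p, ∇ f y⟫` for
all `y`.

An affine minorant of slope `v` forces the asymptotic slope of `f` along `u` to be at least
`⟪v, u⟫`, and this passes to the limit `v = p`. For `u = -p / ‖p‖` the tangent inequality at `s • u`
gives the matching upper bound, and for every other unit vector `u` Cauchy–Schwarz is strict:
`⟪p, u⟫ > -‖p‖`.
-/

open Set
open scoped Gradient Topology

section Normed

theorem iInf_norm_le_norm_of_mem_closure_range {ι E : Type*} [SeminormedAddCommGroup E]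
    {g : ι → E} {p : E} (hp : p ∈ closure (range g)) : ⨅ i, ‖g i‖ ≤ ‖p‖ := by
  refine closure_minimal ?_ (isClosed_le continuous_const continuous_norm) hp
  rintro _ ⟨i, rfl⟩
  exact ciInf_le ⟨0, forall_mem_range.2 fun _ ↦ norm_nonneg _⟩ i

variable {E : Type*} [NormedAddCommGroup E] [NormedSpace ℝ E] {g : E → ℝ} {m : ℝ}

theorem mul_norm_sub_sq_le_of_strongConvexOn {s : Set E} (hg : StrongConvexOn s m g) {a δ : ℝ}
    (ha : ∀ z ∈ s, a ≤ g z) {x y : E} (hxs : x ∈ s) (hys : y ∈ s) (hx : g x ≤ a + δ)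
    (hy : g y ≤ a + δ) : m / 8 * ‖x - y‖ ^ 2 ≤ δ := by
  have hhalf : (0 : ℝ) ≤ 1 / 2 := by norm_num
  have hmid := hg.2 hxs hys hhalf hhalf (add_halves 1)
  have hle := ha _ (hg.1 hxs hys hhalf hhalf (add_halves 1))
  simp only [smul_eq_mul] at hmid
  linarith

theorem exists_forall_le_of_strongConvexOn [CompleteSpace E] (hm : 0 < m)
    (hg : StrongConvexOn univ m g) (hcont : Continuous g) (hbdd : BddBelow (range g)) :
    ∃ x, ∀ y, g x ≤ g y := by
  set a := ⨅ x, g x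
  have ha : ∀ y, a ≤ g y := ciInf_le hbdd
  -- The filter of minimizing sequences; strong convexity makes it Cauchy.
  let F : Filter E := comap g (𝓝 a)
  have : F.NeBot := comap_neBot_iff_frequently.2
    (mem_closure_iff_frequently.1 (csInf_mem_closure (range_nonempty g) hbdd))
  have hF : Cauchy F := by
    refine Metric.cauchy_iff.2 ⟨‹_›, fun ε hε ↦ ?_⟩
    set δ := m / 8 * (ε / 2) ^ 2
    have hδ : 0 < δ := by positivity
    refine ⟨g ⁻¹' Iio (a + δ), preimage_mem_comap (Iio_mem_nhds (by linarith)),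
      fun x hx y hy ↦ ?_⟩
    have hsq : ‖x - y‖ ^ 2 ≤ (ε / 2) ^ 2 := le_of_mul_le_mul_left
      (mul_norm_sub_sq_le_of_strongConvexOn hg (fun z _ ↦ ha z) (mem_univ x) (mem_univ y)
        (le_of_lt hx) (le_of_lt hy)) (by positivity)
    rw [dist_eq_norm]
    linarith [le_of_sq_le_sq hsq (half_pos hε).le]
  obtain ⟨x, hx⟩ := CompleteSpace.complete hF
  have hgx : g x = a := tendsto_nhds_unique ((hcont.tendsto x).mono_left hx) tendsto_comap
  exact ⟨x, fun y ↦ hgx.trans_le (ha y)⟩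

end Normed

section AsymptoticSlope

/-- The recession function `f^∞` on an arbitrary real vector space. It takes values in `EReal`
because the supremum of the difference quotients may be infinite. -/
noncomputable def asymptoticSlope {E : Type*} [AddCommGroup E] [Module ℝ E] (f : E → ℝ) (u : E) :
    EReal :=
  ⨆ (s : ℝ) (_ : 0 < s), (((f (s • u) - f 0) / s : ℝ) : EReal)

variable {E : Type*} [NormedAddCommGroup E] [InnerProductSpace ℝ E] {f : E → ℝ} {v : E}

/-- The effective domain of the convex conjugate `f^*`, with `E` identified with its dual: `f^* v`
is finite exactly when some affine function of slope `v` lies below `f`. -/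
def conjugateDomain (f : E → ℝ) : Set E :=
  {v | ∃ c : ℝ, ∀ x, ⟪v, x⟫ + c ≤ f x}

theorem convex_conjugateDomain (f : E → ℝ) : Convex ℝ (conjugateDomain f) := by
  rintro v ⟨c, hc⟩ w ⟨d, hd⟩ a b ha hb hab
  refine ⟨a * c + b * d, fun x ↦ ?_⟩
  calc ⟪a • v + b • w, x⟫ + (a * c + b * d)
      = a * (⟪v, x⟫ + c) + b * (⟪w, x⟫ + d) := by
        rw [inner_add_left, real_inner_smul_left, real_inner_smul_left]; ring
    _ ≤ a * f x + b * f x := by gcongr; exacts [hc x, hd x]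
    _ = f x := by rw [← add_mul, hab, one_mul]

theorem inner_le_asymptoticSlope_of_mem_conjugateDomain (hv : v ∈ conjugateDomain f) (u : E) :
    ((⟪v, u⟫ : ℝ) : EReal) ≤ asymptoticSlope f u := by
  obtain ⟨c, hc⟩ := hv
  have hlim : Tendsto (fun s : ℝ ↦ ⟪v, u⟫ + (c - f 0) / s) atTop (𝓝 ⟪v, u⟫) := by
    simpa using (tendsto_const_nhds.div_atTop tendsto_id).const_add ⟪v, u⟫
  refine le_of_tendsto ((continuous_coe_real_ereal.tendsto _).comp hlim) ?_
  filter_upwards [eventually_gt_atTop 0] with s hs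
  refine le_iSup₂_of_le s hs (EReal.coe_le_coe_iff.2 ?_)
  rw [le_div_iff₀ hs, add_mul, div_mul_cancel₀ _ hs.ne']
  have hsu := hc (s • u)
  rw [real_inner_smul_right] at hsu
  linarith

theorem inner_le_asymptoticSlope_of_mem_closure_conjugateDomain
    (hv : v ∈ closure (conjugateDomain f)) (u : E) :
    ((⟪v, u⟫ : ℝ) : EReal) ≤ asymptoticSlope f u :=
  closure_minimal (fun _ hw ↦ inner_le_asymptoticSlope_of_mem_conjugateDomain hw u)
    (isClosed_le (continuous_coe_real_ereal.comp (by fun_prop)) continuous_const) hv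

end AsymptoticSlope

section InnerProduct

variable {E : Type*} [NormedAddCommGroup E] [InnerProductSpace ℝ E] {u p : E}

theorem norm_sq_le_inner_of_forall_norm_le {K : Set E} (hK : Convex ℝ K) (hp : p ∈ K)
    (hmin : ∀ q ∈ K, ‖p‖ ≤ ‖q‖) {q : E} (hq : q ∈ K) : ‖p‖ ^ 2 ≤ ⟪p, q⟫ := by
  have : Nonempty K := ⟨⟨p, hp⟩⟩
  have hinf : ‖0 - p‖ = ⨅ w : K, ‖0 - (w : E)‖ := by
    simp only [zero_sub, norm_neg]
    exact le_antisymm (le_ciInf fun w ↦ hmin w w.2)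
      (ciInf_le (f := fun w : K ↦ ‖(w : E)‖) ⟨0, forall_mem_range.2 fun _ ↦ norm_nonneg _⟩ ⟨p, hp⟩)
  have hangle := (norm_eq_iInf_iff_real_inner_le_zero hK hp).1 hinf q hq
  rw [zero_sub, inner_neg_left, inner_sub_right, real_inner_self_eq_norm_sq] at hangle
  linarith

theorem neg_norm_lt_inner_of_ne_neg_normalize (hp : p ≠ 0) (hu : ‖u‖ = 1)
    (hne : u ≠ -(‖p‖⁻¹ • p)) : -‖p‖ < ⟪p, u⟫ := by
  have hlt : ⟪p, -u⟫ < ‖p‖ * ‖-u‖ := by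
    refine inner_lt_norm_mul_iff_real.2 fun heq ↦ hne ?_
    rw [norm_neg, hu, one_smul] at heq
    exact neg_eq_iff_eq_neg.1 ((eq_inv_smul_iff₀ (norm_ne_zero_iff.2 hp)).2 heq.symm)
  rw [inner_neg_right, norm_neg, hu, mul_one] at hlt
  linarith

end InnerProduct

section Gradient

variable {E : Type*} [NormedAddCommGroup E] [InnerProductSpace ℝ E] [CompleteSpace E]
  {f : E → ℝ} {u v p : E}

theorem add_inner_gradient_le {s : Set E} (hconv : ConvexOn ℝ s f) {x y : E} (hx : x ∈ s)
    (hy : y ∈ s) (hf : DifferentiableAt ℝ f x) : f x + ⟪∇ f x, y - x⟫ ≤ f y := by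
  let line : ℝ →ᵃ[ℝ] E := AffineMap.lineMap x y
  have hline : ConvexOn ℝ (line ⁻¹' s) (f ∘ line) := hconv.comp_affineMap line
  have hderiv : HasDerivAt (f ∘ line) ⟪∇ f x, y - x⟫ 0 := by
    rw [inner_gradient_left]
    have hfx : HasFDerivAt f (fderiv ℝ f x) (line 0) := by
      simpa only [line, AffineMap.lineMap_apply_zero] using hf.hasFDerivAt
    exact hfx.comp_hasDerivAt 0 AffineMap.hasDerivAt_lineMap
  have hslope := hline.le_slope_of_hasDerivAt (by simpa [line] using hx : (0 : ℝ) ∈ line ⁻¹' s)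
    (by simpa [line] using hy : (1 : ℝ) ∈ line ⁻¹' s) one_pos hderiv
  simp only [slope_def_field, Function.comp_apply, line, AffineMap.lineMap_apply_zero,
    AffineMap.lineMap_apply_one, sub_zero, div_one] at hslope
  linarith

theorem range_gradient_subset_conjugateDomain (hconv : ConvexOn ℝ univ f)
    (hf : Differentiable ℝ f) : range (∇ f) ⊆ conjugateDomain f := by
  rintro _ ⟨x, rfl⟩
  refine ⟨f x - ⟪∇ f x, x⟫, fun y ↦ ?_⟩
  have htangent := add_inner_gradient_le hconv (mem_univ x) (mem_univ y) (hf x)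
  rw [inner_sub_right] at htangent
  linarith

theorem asymptoticSlope_le_of_forall_inner_gradient_le (hconv : ConvexOn ℝ univ f)
    (hf : Differentiable ℝ f) {c : ℝ} (hc : ∀ y, ⟪∇ f y, u⟫ ≤ c) : asymptoticSlope f u ≤ c := by
  refine iSup₂_le fun s hs ↦ EReal.coe_le_coe_iff.2 ((div_le_iff₀ hs).2 ?_)
  have htangent := add_inner_gradient_le hconv (mem_univ (s • u)) (mem_univ 0) (hf _)
  rw [zero_sub, inner_neg_right, real_inner_smul_right] at htangent
  have hslope := mul_le_mul_of_nonneg_left (hc (s • u)) hs.le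
  linarith

theorem exists_forall_sub_inner_add_norm_sq_le (hconv : ConvexOn ℝ univ f) (hcont : Continuous f)
    (hv : v ∈ conjugateDomain f) {ε : ℝ} (hε : 0 < ε) :
    ∃ x, ∀ y, f x - ⟪v, x⟫ + ε / 2 * ‖x‖ ^ 2 ≤ f y - ⟪v, y⟫ + ε / 2 * ‖y‖ ^ 2 := by
  obtain ⟨c, hc⟩ := hv
  refine exists_forall_le_of_strongConvexOn hε (strongConvexOn_iff_convex.2 ?_) (by fun_prop)
    ⟨c, forall_mem_range.2 fun x ↦ ?_⟩
  · simp only [add_sub_cancel_right]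
    exact hconv.sub ((innerₛₗ ℝ v).concaveOn convex_univ)
  · have hquad : 0 ≤ ε / 2 * ‖x‖ ^ 2 := by positivity
    linarith [hc x]

theorem sub_gradient_eq_smul_of_isLocalMin {x : E} (hf : DifferentiableAt ℝ f x) {ε : ℝ}
    (hx : IsLocalMin (fun y ↦ f y - ⟪v, y⟫ + ε / 2 * ‖y‖ ^ 2) x) : v - ∇ f x = ε • x := by
  have hderiv : HasFDerivAt (fun y ↦ f y - ⟪v, y⟫ + ε / 2 * ‖y‖ ^ 2)
      (fderiv ℝ f x - innerSL ℝ v + (ε / 2) • (2 • innerSL ℝ x)) x :=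
    (hf.hasFDerivAt.sub (innerSL ℝ v).hasFDerivAt).add
      ((hasStrictFDerivAt_norm_sq x).hasFDerivAt.const_mul (ε / 2))
  have hzero := hx.hasFDerivAt_eq_zero hderiv
  refine ext_inner_right ℝ fun w ↦ ?_
  have hw := DFunLike.congr_fun hzero w
  simp only [add_apply, sub_apply, smul_apply, innerSL_apply_apply, zero_apply, smul_eq_mul,
    nsmul_eq_mul, Nat.cast_ofNat] at hw
  rw [inner_sub_left, inner_gradient_left, real_inner_smul_left]
  linarith

theorem conjugateDomain_subset_closure_range_gradient (hconv : ConvexOn ℝ univ f)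
    (hf : Differentiable ℝ f) : conjugateDomain f ⊆ closure (range (∇ f)) := by
  rintro v ⟨c, hc⟩
  have happrox : ∀ ε : ℝ, 0 < ε → ∃ x, ‖v - ∇ f x‖ ^ 2 ≤ 2 * ε * (f 0 - c) := by
    intro ε hε
    obtain ⟨x, hx⟩ := exists_forall_sub_inner_add_norm_sq_le hconv hf.continuous ⟨c, hc⟩ hε
    have hzero : f x - ⟪v, x⟫ + ε / 2 * ‖x‖ ^ 2 ≤ f 0 := by simpa using hx 0
    refine ⟨x, ?_⟩
    calc ‖v - ∇ f x‖ ^ 2 = 2 * ε * (ε / 2 * ‖x‖ ^ 2) := by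
          rw [sub_gradient_eq_smul_of_isLocalMin (hf x) (Eventually.of_forall hx), norm_smul,
            mul_pow, Real.norm_eq_abs, sq_abs]
          ring
      _ ≤ 2 * ε * (f 0 - c) := by gcongr; linarith [hc x]
  have hlim : Tendsto (fun ε : ℝ ↦ 2 * ε * (f 0 - c)) (𝓝[>] 0) (𝓝 0) :=
    tendsto_nhdsWithin_of_tendsto_nhds (Continuous.tendsto' (by fun_prop) _ _ (by simp))
  refine Metric.mem_closure_range_iff.2 fun η hη ↦ ?_
  obtain ⟨ε, hεη, hε⟩ :=
    ((hlim.eventually (gt_mem_nhds (pow_pos hη 2))).and self_mem_nhdsWithin).exists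
  obtain ⟨x, hx⟩ := happrox ε hε
  exact ⟨x, dist_eq_norm v (∇ f x) ▸ lt_of_pow_lt_pow_left₀ 2 hη.le (hx.trans_lt hεη)⟩

theorem convex_closure_range_gradient (hconv : ConvexOn ℝ univ f) (hf : Differentiable ℝ f) :
    Convex ℝ (closure (range (∇ f))) := by
  have heq : closure (range (∇ f)) = closure (conjugateDomain f) :=
    (closure_mono (range_gradient_subset_conjugateDomain hconv hf)).antisymm
      (closure_minimal (conjugateDomain_subset_closure_range_gradient hconv hf) isClosed_closure)
  exact heq ▸ (convex_conjugateDomain f).closure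

theorem asymptoticSlope_neg_normalize_le (hconv : ConvexOn ℝ univ f) (hf : Differentiable ℝ f)
    (hmem : p ∈ closure (range (∇ f))) (hmin : ∀ q ∈ closure (range (∇ f)), ‖p‖ ≤ ‖q‖)
    (hp : p ≠ 0) : asymptoticSlope f (-(‖p‖⁻¹ • p)) ≤ ((-‖p‖ : ℝ) : EReal) := by
  refine asymptoticSlope_le_of_forall_inner_gradient_le hconv hf fun y ↦ ?_
  have hvar : ‖p‖ ^ 2 ≤ ⟪p, ∇ f y⟫ :=
    norm_sq_le_inner_of_forall_norm_le (convex_closure_range_gradient hconv hf) hmem hmin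
      (subset_closure (mem_range_self y))
  rw [inner_neg_right, real_inner_smul_right, real_inner_comm, neg_le_neg_iff,
    le_inv_mul_iff₀ (norm_pos_iff.2 hp), ← sq]
  exact hvar

theorem recession_minimizer_opposite_min_norm_gradient_general (hconv : ConvexOn ℝ univ f)
    (hf : Differentiable ℝ f) (hκ : 0 < ⨅ y, ‖∇ f y‖) (hmem : p ∈ closure (range (∇ f)))
    (hmin : ∀ q ∈ closure (range (∇ f)), ‖p‖ ≤ ‖q‖) :
    p ≠ 0 ∧
    asymptoticSlope f (-(‖p‖⁻¹ • p)) = ((-‖p‖ : ℝ) : EReal) ∧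
    ∀ u : E, ‖u‖ = 1 → u ≠ -(‖p‖⁻¹ • p) → ((-‖p‖ : ℝ) : EReal) < asymptoticSlope f u := by
  have hp : p ≠ 0 := norm_pos_iff.1 (hκ.trans_le (iInf_norm_le_norm_of_mem_closure_range hmem))
  have hlower : ∀ u, ((⟪p, u⟫ : ℝ) : EReal) ≤ asymptoticSlope f u :=
    inner_le_asymptoticSlope_of_mem_closure_conjugateDomain
      (closure_mono (range_gradient_subset_conjugateDomain hconv hf) hmem)
  have hinner : ⟪p, -(‖p‖⁻¹ • p)⟫ = -‖p‖ := by
    rw [inner_neg_right, real_inner_smul_right, real_inner_self_eq_norm_mul_norm,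
      inv_mul_cancel_left₀ (norm_ne_zero_iff.2 hp)]
  refine ⟨hp, (asymptoticSlope_neg_normalize_le hconv hf hmem hmin hp).antisymm ?_,
    fun u hu hne ↦ ?_⟩
  · exact hinner ▸ hlower _
  · exact (EReal.coe_lt_coe_iff.2 (neg_norm_lt_inner_of_ne_neg_normalize hp hu hne)).trans_le
      (hlower u)

end Gradient

/-- The unique unit-sphere minimizer of the recession function is opposite to the
minimum-norm gradient point (claim in the proof of Theorem 3.12): if
`κ* := inf_y ‖∇f(y)‖ > 0` and `p*` is the minimum-norm point of the closure of the
gradient image, then `p* ≠ 0`, the unit vector `u* := -p*/‖p*‖` satisfies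
`f^∞(u*) = -‖p*‖`, and every unit vector `u ≠ u*` satisfies `f^∞(u) > -‖p*‖`. -/
theorem recession_minimizer_opposite_min_norm_gradient {n : ℕ} (hn : 1 ≤ n)
    (f : EuclideanSpace ℝ (Fin n) → ℝ)
    (hconv : ConvexOn ℝ Set.univ f) (hf : ContDiff ℝ 1 f)
    (hκ : 0 < ⨅ y, ‖gradient f y‖)
    (p : EuclideanSpace ℝ (Fin n))
    (hmem : p ∈ closure (Set.range (gradient f)))
    (hmin : ∀ q ∈ closure (Set.range (gradient f)), ‖p‖ ≤ ‖q‖) :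
    p ≠ 0 ∧
    recessionFn f (-(‖p‖⁻¹ • p)) = ((-‖p‖ : ℝ) : EReal) ∧
    ∀ u : EuclideanSpace ℝ (Fin n), ‖u‖ = 1 → u ≠ -(‖p‖⁻¹ • p) →
      ((-‖p‖ : ℝ) : EReal) < recessionFn f u :=
  recession_minimizer_opposite_min_norm_gradient_general hconv (hf.differentiable one_ne_zero) hκ
    hmem hmin
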